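/- Let a, b ∈ [0,1] and let A′, B′ be convex bodies in ℝ² with L_a ⊆ A′ ⊆ U_a and L_b ⊆ B′ ⊆ U_b. Then there exist an invertible affine map T : ℝ² → ℝ² and a homothety h with ratio 3 − a such that T(B′) ⊆ A′ ⊆ h(T(B′)); in particular, the Banach–Mazur distance between A′ and B′ is at most 3 − a. -/

import Mathlib

/-- A convex body in the plane: compact, convex, with nonempty interior. -/
def IsConvexBody (A : Set (ℝ × ℝ)) : Prop :=
  Convex ℝ A ∧ IsCompact A ∧ (interior A).Nonempty

/-- The 7-gon `L_a` with vertices (0, 2a/(1+a)), (±1,1), (±2,2), (±1,3). -/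
noncomputable def L (a : ℝ) : Set (ℝ × ℝ) :=
  convexHull ℝ {((0 : ℝ), 2 * a / (1 + a)), (1, 1), (-1, 1), (2, 2), (-2, 2), (1, 3), (-1, 3)}

/-- The polygon `U_a` from Definition 2.1. -/
noncomputable def U (a : ℝ) : Set (ℝ × ℝ) :=
  if a < 1 / 2 then
    convexHull ℝ {((a : ℝ), a), (-a, a), (2 + a, 2 - a), (-(2 + a), 2 - a),
      (3 - a, 3 - a), (-(3 - a), 3 - a), (3 - 2 * a, 3), (-(3 - 2 * a), 3),
      (a, 4 - a), (-a, 4 - a)}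
  else
    convexHull ℝ {((a : ℝ), a), (-a, a), (3 - 2 * a, 1), (-(3 - 2 * a), 1),
      (3 - a, 1 + a), (-(3 - a), 1 + a), (3 - a, 3 - a), (-(3 - a), 3 - a),
      (3 - 2 * a, 3), (-(3 - 2 * a), 3), (a, 4 - a), (-a, 4 - a)}

/-- The Banach–Mazur distance: the infimum of λ > 0 such that T(A) ⊆ B ⊆ h(T(A)) for some
invertible affine map T and homothety h with ratio λ. -/
noncomputable def BMdist (A B : Set (ℝ × ℝ)) : ℝ :=
  sInf {l : ℝ | 0 < l ∧ ∃ (T : ℝ × ℝ ≃ᵃ[ℝ] ℝ × ℝ) (c : ℝ × ℝ),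
    T '' A ⊆ B ∧ B ⊆ AffineMap.homothety c l '' (T '' A)}

lemma L_mem (a x y : ℝ) (ha : a ∈ Set.Icc (0 : ℝ) 1) (h1 : y ≤ 3) (h2 : |x| + y ≤ 4)
    (h3 : |x| ≤ y) (h4 : 2 * a + (1 - a) * |x| ≤ (1 + a) * y) : (x, y) ∈ L a := by
  obtain ⟨ha0, ha1⟩ := ha
  have hc : Convex ℝ (L a) := convex_convexHull ℝ _
  have p0 : ((0 : ℝ), 2 * a / (1 + a)) ∈ L a := subset_convexHull ℝ _ (by simp)
  have p1 : ((1 : ℝ), (1 : ℝ)) ∈ L a := subset_convexHull ℝ _ (by simp)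
  have p2 : ((-1 : ℝ), (1 : ℝ)) ∈ L a := subset_convexHull ℝ _ (by simp)
  have p3 : ((2 : ℝ), (2 : ℝ)) ∈ L a := subset_convexHull ℝ _ (by simp)
  have p4 : ((-2 : ℝ), (2 : ℝ)) ∈ L a := subset_convexHull ℝ _ (by simp)
  have p5 : ((1 : ℝ), (3 : ℝ)) ∈ L a := subset_convexHull ℝ _ (by simp)
  have p6 : ((-1 : ℝ), (3 : ℝ)) ∈ L a := subset_convexHull ℝ _ (by simp)
  have hx1 := le_abs_self x
  have hx2 := neg_le_abs x
  have hx0 := abs_nonneg x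
  have seg : ∀ m : ℝ, 0 < m → |x| ≤ m → (m, y) ∈ L a → (-m, y) ∈ L a → (x, y) ∈ L a := by
    intro m hm hxm q1 q2
    have := hc q1 q2 (a := (m + x) / (2 * m)) (b := (m - x) / (2 * m))
      (div_nonneg (by linarith) (by linarith)) (div_nonneg (by linarith) (by linarith))
      (by field_simp; ring)
    convert this using 1
    ext
    · simp; field_simp; ring
    · simp; field_simp; ring
  rcases le_total 2 y with hy | hy
  · apply seg (4 - y) (by linarith) (by linarith)
    · have := hc p3 p5 (a := 3 - y) (b := y - 2) (by linarith) (by linarith) (by ring)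
      convert this using 1
      ext <;> simp <;> ring
    · have := hc p4 p6 (a := 3 - y) (b := y - 2) (by linarith) (by linarith) (by ring)
      convert this using 1
      ext <;> simp <;> ring
  rcases le_total 1 y with hy1 | hy1
  · apply seg y (by linarith) (by linarith)
    · have := hc p1 p3 (a := 2 - y) (b := y - 1) (by linarith) (by linarith) (by ring)
      convert this using 1
      ext <;> simp <;> ring
    · have := hc p2 p4 (a := 2 - y) (b := y - 1) (by linarith) (by linarith) (by ring)
      convert this using 1
      ext <;> simp <;> ring
  rcases eq_or_lt_of_le ha1 with h | h
  · have hy2 : y = 1 := by subst h; linarith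
    subst hy2
    exact seg 1 one_pos h3 p1 p2
  · have hpos : 0 < 1 - a := by linarith
    have hpos' : 0 < 1 + a := by linarith
    -- weight of the bottom vertex
    set w := (1 + a) * (1 - y) / (1 - a) with hw
    have hw0 : 0 ≤ w := div_nonneg (mul_nonneg hpos'.le (by linarith)) hpos.le
    have hw1 : w ≤ 1 - |x| := by
      rw [hw, div_le_iff₀ hpos]; nlinarith
    have hwy : w * (1 - a) = (1 + a) * (1 - y) := by rw [hw]; field_simp
    have := hc.sum_mem (t := Finset.univ) (w := ![w, (1 - w + x) / 2, (1 - w - x) / 2])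
      (z := ![((0 : ℝ), 2 * a / (1 + a)), (1, 1), (-1, 1)])
      (by intro i _; fin_cases i <;> simp <;> linarith)
      (by simp [Fin.sum_univ_three]; ring)
      (by intro i _; fin_cases i <;> simp [p0, p1, p2])
    convert this using 1
    ext
    · simp [Fin.sum_univ_three]; ring
    · simp [Fin.sum_univ_three]; field_simp; linarith

/-- The linear part `(x, y) ↦ (y, x / 3)`. -/
noncomputable def linT : (ℝ × ℝ) ≃ₗ[ℝ] (ℝ × ℝ) where
  toFun p := (p.2, p.1 / 3)
  invFun p := (3 * p.2, p.1)
  map_add' p q := by ext <;> simp; ring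
  map_smul' c p := by ext <;> simp; ring
  left_inv p := by ext <;> simp; ring
  right_inv p := by ext <;> simp

/-- The affine map `(x, y) ↦ (y - 2, 2 + x / 3)`. -/
noncomputable def affT : (ℝ × ℝ) ≃ᵃ[ℝ] (ℝ × ℝ) :=
  linT.toAffineEquiv.trans (AffineEquiv.constVAdd ℝ (ℝ × ℝ) ((-2 : ℝ), (2 : ℝ)))

lemma affT_apply (x y : ℝ) : affT (x, y) = (y - 2, 2 + x / 3) := by
  ext <;> simp [affT, linT]; ring

lemma U_vert (a : ℝ) (ha : a ∈ Set.Icc (0 : ℝ) 1) (S : Set (ℝ × ℝ)) (hS : Convex ℝ S)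
    (h1 : ∀ s : ℝ, (s = 1 ∨ s = -1) → (s * a, a) ∈ S)
    (h2 : ∀ s : ℝ, (s = 1 ∨ s = -1) → a < 1 / 2 → (s * (2 + a), 2 - a) ∈ S)
    (h3 : ∀ s : ℝ, (s = 1 ∨ s = -1) → (s * (3 - a), 3 - a) ∈ S)
    (h4 : ∀ s : ℝ, (s = 1 ∨ s = -1) → (s * (3 - 2 * a), 3) ∈ S)
    (h5 : ∀ s : ℝ, (s = 1 ∨ s = -1) → (s * a, 4 - a) ∈ S)
    (h6 : ∀ s : ℝ, (s = 1 ∨ s = -1) → (s * (3 - 2 * a), 1) ∈ S)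
    (h7 : ∀ s : ℝ, (s = 1 ∨ s = -1) → (s * (3 - a), 1 + a) ∈ S) : U a ⊆ S := by
  have e : ∀ (f : ℝ → ℝ × ℝ), (∀ s : ℝ, (s = 1 ∨ s = -1) → f s ∈ S) → f 1 ∈ S ∧ f (-1) ∈ S :=
    fun f hf => ⟨hf 1 (Or.inl rfl), hf (-1) (Or.inr rfl)⟩
  have k1 := e _ h1
  have k3 := e _ h3
  have k4 := e _ h4
  have k5 := e _ h5
  have k6 := e _ h6
  have k7 := e _ h7
  simp only [one_mul, neg_one_mul] at k1 k3 k4 k5 k6 k7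
  unfold U
  split_ifs with hlt
  · have k2 := e _ (fun s hs => h2 s hs hlt)
    simp only [one_mul, neg_one_mul] at k2
    apply convexHull_min _ hS
    intro p hp
    simp only [Set.mem_insert_iff, Set.mem_singleton_iff] at hp
    rcases hp with h | h | h | h | h | h | h | h | h | h <;> rw [h] <;> tauto
  · apply convexHull_min _ hS
    intro p hp
    simp only [Set.mem_insert_iff, Set.mem_singleton_iff] at hp
    rcases hp with h | h | h | h | h | h | h | h | h | h | h | h <;> rw [h] <;> tauto

lemma incl1 (a b : ℝ) (ha : a ∈ Set.Icc (0 : ℝ) 1) (hb : b ∈ Set.Icc (0 : ℝ) 1) :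
    U b ⊆ affT ⁻¹' (L a) := by
  have hc : Convex ℝ (affT ⁻¹' (L a)) :=
    Convex.affine_preimage affT.toAffineMap (convex_convexHull ℝ _)
  have key : ∀ x y : ℝ, |x| ≤ 3 → |y - 2| + |x| / 3 ≤ 2 → (x, y) ∈ affT ⁻¹' (L a) := by
    intro x y h1 h2
    rw [Set.mem_preimage, affT_apply]
    obtain ⟨ha0, ha1⟩ := ha
    have := abs_le.1 h1
    have hx1 := le_abs_self x
    have hx2 := neg_le_abs x
    have hy0 := abs_nonneg (y - 2)
    apply L_mem a _ _ ⟨ha0, ha1⟩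
    · linarith
    · linarith
    · linarith
    · nlinarith
  obtain ⟨hb0, hb1⟩ := hb
  apply U_vert b ⟨hb0, hb1⟩ _ hc <;> intro s hs
  all_goals
    try intro hlt
    have hs1 : |s| = 1 := by rcases hs with rfl | rfl <;> simp
    apply key <;> rw [abs_mul, hs1, one_mul]
    · rw [abs_le]; constructor <;> linarith
  all_goals
    rw [← le_sub_iff_add_le, abs_le]
    constructor <;> cases abs_cases b <;> cases abs_cases (2 + b) <;> cases abs_cases (3 - b) <;>
      cases abs_cases (3 - 2 * b) <;> linarith

lemma incl2 (a b : ℝ) (ha : a ∈ Set.Icc (0 : ℝ) 1) (hb : b ∈ Set.Icc (0 : ℝ) 1) :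
    U a ⊆ AffineMap.homothety ((0 : ℝ), (2 : ℝ)) (3 - a) '' (affT '' (L b)) := by
  have hc : Convex ℝ (AffineMap.homothety ((0 : ℝ), (2 : ℝ)) (3 - a) '' (affT '' (L b))) := by
    apply Convex.affine_image
    exact Convex.affine_image affT.toAffineMap (convex_convexHull ℝ _)
  obtain ⟨ha0, ha1⟩ := ha
  obtain ⟨hb0, hb1⟩ := hb
  have key : ∀ x y : ℝ, |x| ≤ 3 - a → |x| + 3 * |y - 2| ≤ 2 * (3 - a) →
      (1 + b) * |x| + 3 * (1 - b) * |y - 2| ≤ 2 * (3 - a) →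
      (x, y) ∈ AffineMap.homothety ((0 : ℝ), (2 : ℝ)) (3 - a) '' (affT '' (L b)) := by
    intro x y h1 h2 h3
    have hz : 0 < 3 - a := by linarith
    refine ⟨_, ⟨(3 * (y - 2) / (3 - a), 2 + x / (3 - a)), ?_, rfl⟩, ?_⟩
    · have hx1 := le_abs_self x
      have hx2 := neg_le_abs x
      have e : |3 * (y - 2) / (3 - a)| = 3 * |y - 2| / (3 - a) := by
        rw [abs_div, abs_mul, abs_of_pos hz]; simp
      set Y := |y - 2|
      have t1 : x / (3 - a) ≤ 1 := by rw [div_le_one hz]; linarith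
      have t2 : 3 * Y / (3 - a) + x / (3 - a) ≤ 2 := by
        rw [← add_div, div_le_iff₀ hz]; linarith
      have t3 : 3 * Y / (3 - a) - x / (3 - a) ≤ 2 := by
        rw [← sub_div, div_le_iff₀ hz]; linarith
      have t4 : (1 - b) * (3 * Y / (3 - a)) - (1 + b) * (x / (3 - a)) ≤ 2 := by
        rw [← mul_div_assoc, ← mul_div_assoc, ← sub_div, div_le_iff₀ hz]
        nlinarith
      apply L_mem b _ _ ⟨hb0, hb1⟩ <;> (try rw [e]) <;> linarith
    · rw [affT_apply]
      ext
      · simp [AffineMap.homothety_apply]; field_simp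
      · simp [AffineMap.homothety_apply]; field_simp; ring
  have hab := mul_nonneg ha0 hb0
  have hab1 := mul_nonneg hb0 (sub_nonneg.2 ha1)
  have hab2 := mul_nonneg ha0 (sub_nonneg.2 hb1)
  apply U_vert a ⟨ha0, ha1⟩ _ hc <;> intro s hs
  all_goals
    try intro hlt
    have hs1 : |s| = 1 := by rcases hs with rfl | rfl <;> simp
    apply key <;> rw [abs_mul, hs1, one_mul]
  all_goals
    simp only [abs_of_nonneg ha0, abs_of_nonneg (show (0:ℝ) ≤ 2 + a by linarith),
      abs_of_nonneg (show (0:ℝ) ≤ 3 - a by linarith),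
      abs_of_nonneg (show (0:ℝ) ≤ 3 - 2 * a by linarith)]
  all_goals
    first
    | linarith
    | (rcases abs_cases (a - 2) with ⟨h, _⟩ | ⟨h, _⟩ <;> rw [h] <;> nlinarith)
    | (rcases abs_cases (2 - a - 2) with ⟨h, _⟩ | ⟨h, _⟩ <;> rw [h] <;> nlinarith)
    | (rcases abs_cases (3 - a - 2) with ⟨h, _⟩ | ⟨h, _⟩ <;> rw [h] <;> nlinarith)
    | (rcases abs_cases (4 - a - 2) with ⟨h, _⟩ | ⟨h, _⟩ <;> rw [h] <;> nlinarith)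
    | (rcases abs_cases (1 + a - 2) with ⟨h, _⟩ | ⟨h, _⟩ <;> rw [h] <;> nlinarith)
    | (norm_num; nlinarith)

theorem stmt_10 (a b : ℝ) (ha : a ∈ Set.Icc (0 : ℝ) 1) (hb : b ∈ Set.Icc (0 : ℝ) 1)
    (A' B' : Set (ℝ × ℝ)) (hA : IsConvexBody A') (hB : IsConvexBody B')
    (hLa : L a ⊆ A') (hUa : A' ⊆ U a) (hLb : L b ⊆ B') (hUb : B' ⊆ U b) :
    (∃ (T : ℝ × ℝ ≃ᵃ[ℝ] ℝ × ℝ) (c : ℝ × ℝ),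
      T '' B' ⊆ A' ∧ A' ⊆ AffineMap.homothety c (3 - a) '' (T '' B')) ∧
    BMdist B' A' ≤ 3 - a := by
  have main : ∃ (T : ℝ × ℝ ≃ᵃ[ℝ] ℝ × ℝ) (c : ℝ × ℝ),
      T '' B' ⊆ A' ∧ A' ⊆ AffineMap.homothety c (3 - a) '' (T '' B') := by
    refine ⟨affT, (0, 2), ?_, ?_⟩
    · rintro _ ⟨p, hp, rfl⟩
      exact hLa (incl1 a b ha hb (hUb hp))
    · exact (hUa.trans (incl2 a b ha hb)).trans (Set.image_mono (Set.image_mono hLb))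
  refine ⟨main, csInf_le ⟨0, fun l hl => hl.1.le⟩ ⟨by linarith [ha.2], main⟩⟩
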